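/- Let Σ be a positive definite 2×2 matrix and f(x₁,x₂) = ax₁² + 2bx₁x₂ + cx₂² a nonzero quadratic form with matrix A = [[a,b],[b,c]] ≠ 0. If the discriminant satisfies b² − ac ≥ 0, then W_{f,Σ} is distributed as (1/4)·χ²₁. -/

import Mathlib

open MeasureTheory ProbabilityTheory Matrix MvPolynomial Real

noncomputable section

/-- The distribution of a vector of independent standard normal random variables. -/
def stdGaussian (ι : Type*) [Fintype ι] : Measure (ι → ℝ) :=
  Measure.pi fun _ => gaussianReal 0 1

/-- `μ` is the distribution of a centered Gaussian random vector with covariance matrix `S`,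
i.e. `μ` is the law of `A Z` for a vector `Z` of i.i.d. standard normals with `A Aᵀ = S`. -/
def IsCenteredGaussian {ι : Type*} [Fintype ι] (μ : Measure (ι → ℝ))
    (S : Matrix ι ι ℝ) : Prop :=
  ∃ A : Matrix ι ι ℝ, A * Aᵀ = S ∧ μ = (stdGaussian ι).map A.mulVec

/-- The gradient of a polynomial. -/
def polyGrad {ι : Type*} [Fintype ι] (f : MvPolynomial ι ℝ) (x : ι → ℝ) : ι → ℝ :=
  fun i => eval x (pderiv i f)

/-- The Wald ratio `W_{f,S}(x) = f(x)² / (∇f(x)ᵀ S ∇f(x))`. -/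
def waldRV {ι : Type*} [Fintype ι] (f : MvPolynomial ι ℝ) (S : Matrix ι ι ℝ)
    (x : ι → ℝ) : ℝ :=
  (eval x f) ^ 2 / (polyGrad f x ⬝ᵥ S.mulVec (polyGrad f x))

/-- The chi-square distribution with `k` degrees of freedom. -/
def chiSq (k : ℕ) : Measure ℝ :=
  (stdGaussian (Fin k)).map fun z => ∑ i, (z i) ^ 2

/-!
Whitening reduces the claim to a standard Gaussian vector `Z` and the matrix `B = Lᵀ A L`, where
`Σ = L Lᵀ`. By homogeneity the law of the Wald ratio depends only on how it behaves on the unit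
circle. In complex notation `B z = p z + β z̄`, so for `|z| = 1` the Wald ratio `W` satisfies
`4 W = (Re V)² / |V|² = (1 + Re (V̄ / V)) / 2` with `V = z̄ (B z) = p + β z̄²`. The discriminant is
nonnegative iff `|p| ≤ |β|`, and then `V̄ / V = z² (p + β̄ z²) / (β + p z²)` is the boundary value
of a Blaschke product vanishing at `0` (a multiple of `z²` when `|p| = |β|`). By Löwner's lemma such
a boundary map preserves arc length. The map `z ↦ z²` does so too and yields `(1 + Re z²) / 2 =
(Re z)²`, hence `4 W` has the law of `Z₁²`.
-/

open scoped ComplexConjugate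

instance : MeasurableSpace Circle := borel Circle

instance : BorelSpace Circle := ⟨rfl⟩

theorem circle_mul_conj (z : Circle) : (z : ℂ) * conj (z : ℂ) = 1 := by
  rw [Complex.mul_conj, z.normSq_coe, Complex.ofReal_one]

theorem measure_circle_ext_of_integral_pow_mul_conj_pow {μ ν : Measure Circle} [IsFiniteMeasure μ]
    [IsFiniteMeasure ν] (h : ∀ m n : ℕ, ∫ z : Circle, (z : ℂ) ^ m * conj (z : ℂ) ^ n ∂μ =
      ∫ z : Circle, (z : ℂ) ^ m * conj (z : ℂ) ^ n ∂ν) :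
    μ = ν := by
  let ι : BoundedContinuousFunction Circle ℂ := .mkOfCompact ⟨((↑) : Circle → ℂ), by fun_prop⟩
  have h_sep : ((StarAlgebra.adjoin ℂ {ι}).map
      (BoundedContinuousFunction.toContinuousMapStarₐ ℂ)).SeparatesPoints := by
    intro z w hzw
    refine ⟨_, ⟨_, ⟨ι, StarAlgebra.self_mem_adjoin_singleton ℂ ι, rfl⟩, rfl⟩, ?_⟩
    exact fun h_eq => hzw (Circle.ext h_eq)
  refine ext_of_forall_mem_subalgebra_integral_eq_of_polish h_sep fun g hg => ?_
  have hg_span : g ∈ Submodule.span ℂ (Submonoid.closure {ι, star ι} : Set _) := by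
    rw [← StarSubalgebra.mem_toSubalgebra, StarAlgebra.adjoin_toSubalgebra, Set.star_singleton,
      Set.singleton_union, ← Subalgebra.mem_toSubmodule, Algebra.adjoin_eq_span] at hg
    exact hg
  clear hg
  induction hg_span using Submodule.span_induction with
  | mem g hg =>
    obtain ⟨m, n, rfl⟩ :=
      (Submonoid.mem_closure_pair (A := BoundedContinuousFunction Circle ℂ) _ _ _).1 hg
    exact h m n
  | zero => simp
  | add g₁ g₂ _ _ h₁ h₂ => simp [integral_add (g₁.integrable _) (g₂.integrable _), h₁, h₂]
  | smul c g _ hg => simp [integral_const_mul, hg]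

theorem measure_circle_ext_of_integral_pow {μ ν : Measure Circle} [IsFiniteMeasure μ]
    [IsFiniteMeasure ν] (h : ∀ n : ℕ, ∫ z : Circle, (z : ℂ) ^ n ∂μ = ∫ z : Circle, (z : ℂ) ^ n ∂ν) :
    μ = ν := by
  refine measure_circle_ext_of_integral_pow_mul_conj_pow fun m n => ?_
  have mul_conj_pow (z : Circle) (k : ℕ) : (z : ℂ) ^ k * conj (z : ℂ) ^ k = 1 := by
    rw [← mul_pow, circle_mul_conj, one_pow]
  obtain ⟨d, rfl⟩ | ⟨d, rfl⟩ := (le_total n m).imp Nat.exists_eq_add_of_le Nat.exists_eq_add_of_le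
  · have h_reduce (z : Circle) : (z : ℂ) ^ (n + d) * conj (z : ℂ) ^ n = (z : ℂ) ^ d := by
      rw [pow_add, mul_right_comm, mul_conj_pow, one_mul]
    simp_rw [h_reduce, h]
  · have h_reduce (z : Circle) : (z : ℂ) ^ m * conj (z : ℂ) ^ (m + d) = conj ((z : ℂ) ^ d) := by
      rw [pow_add, ← mul_assoc, mul_conj_pow, one_mul, map_pow]
    simp_rw [h_reduce, integral_conj, h]

/-- Arc length on the unit circle, of total mass `2π`, parametrized by the range `(-π, π)` of the
angle in `polarCoord`. -/
def circleArc : Measure Circle :=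
  (volume.restrict (Set.Ioo (-π) π)).map Circle.exp

instance : IsFiniteMeasure circleArc := by
  unfold circleArc; infer_instance

theorem integral_circleArc {E : Type*} [NormedAddCommGroup E] [NormedSpace ℝ E] {f : ℂ → E}
    (hf : ContinuousOn f (Metric.sphere 0 1)) :
    ∫ z : Circle, f z ∂circleArc = (2 * π) • circleAverage f 0 1 := by
  have hf_circle : Continuous fun z : Circle => f z :=
    hf.comp_continuous (by fun_prop) fun z => z.2
  have h_periodic : Function.Periodic (fun t : ℝ => f (circleMap 0 1 t)) (2 * π) :=
    (periodic_circleMap 0 1).comp f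
  calc ∫ z : Circle, f z ∂circleArc = ∫ t in Set.Ioo (-π) π, f (Circle.exp t) :=
        integral_map Circle.exp.continuous.aemeasurable
          hf_circle.aestronglyMeasurable_of_compactSpace
    _ = ∫ t in (-π)..(-π + 2 * π), f (circleMap 0 1 t) := by
        rw [intervalIntegral.integral_of_le (by linarith [pi_pos]), integral_Ioc_eq_integral_Ioo,
          show -π + 2 * π = π by ring]
        simp [circleMap_zero, Circle.coe_exp]
    _ = ∫ t in (0)..(2 * π), f (circleMap 0 1 t) := by
        rw [h_periodic.intervalIntegral_add_eq (-π) 0, zero_add]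
    _ = (2 * π) • circleAverage f 0 1 := by
        rw [circleAverage_def, smul_inv_smul₀ (by positivity)]

theorem integral_circleArc_of_diffContOnCl {f : ℂ → ℂ} (hf : DiffContOnCl ℂ f (Metric.ball 0 1)) :
    ∫ z : Circle, f z ∂circleArc = (2 * π) • f 0 := by
  have hf_sphere : ContinuousOn f (Metric.sphere 0 1) :=
    hf.continuousOn_ball.mono Metric.sphere_subset_closedBall
  rw [integral_circleArc hf_sphere, DiffContOnCl.circleAverage (by rwa [abs_one])]

theorem diffContOnCl_pow {f : ℂ → ℂ} {s : Set ℂ} (hf : DiffContOnCl ℂ f s) (n : ℕ) :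
    DiffContOnCl ℂ (fun z => f z ^ n) s :=
  ⟨hf.1.pow n, hf.2.pow n⟩

/-- **Löwner's lemma**. The moments `∫ φ ^ n` agree with those of arc length because the mean value
property reduces both to the value `0 ^ n` at the origin. -/
theorem measurePreserving_circleArc_of_boundary_values {f : ℂ → ℂ} {φ : Circle → Circle}
    (hf : DiffContOnCl ℂ f (Metric.ball 0 1)) (h0 : f 0 = 0) (hφ : ∀ z : Circle, (φ z : ℂ) = f z) :
    MeasurePreserving φ circleArc circleArc := by
  have hφ_cont : Continuous φ := by
    have hφ_coe : Continuous fun z => (φ z : ℂ) := by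
      simp only [hφ]
      exact hf.continuousOn_ball.comp_continuous (by fun_prop)
        fun z => Metric.sphere_subset_closedBall z.2
    exact hφ_coe.subtype_mk fun z => (φ z).2
  refine ⟨hφ_cont.measurable, measure_circle_ext_of_integral_pow fun n => ?_⟩
  have hid : DiffContOnCl ℂ (fun z : ℂ => z) (Metric.ball 0 1) := differentiable_id.diffContOnCl
  rw [integral_map hφ_cont.aemeasurable (by fun_prop)]
  simp_rw [hφ]
  rw [integral_circleArc_of_diffContOnCl (diffContOnCl_pow hf n),
    integral_circleArc_of_diffContOnCl (diffContOnCl_pow hid n), h0]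

theorem measurePreserving_const_mul_pow (u : Circle) {n : ℕ} (hn : n ≠ 0) :
    MeasurePreserving (fun z : Circle => u * z ^ n) circleArc circleArc :=
  measurePreserving_circleArc_of_boundary_values (f := fun z => u * z ^ n)
    (Differentiable.diffContOnCl (by fun_prop)) (by simp [hn]) fun z => by simp

/-- The law of the norm of a planar standard Gaussian vector, divided by `2π` to make up for the
total mass of `circleArc`. -/
def gaussianRadial : Measure ℝ :=
  (volume.restrict (Set.Ioi 0)).withDensity fun r =>
    ENNReal.ofReal (r * exp (-r ^ 2 / 2) / (2 * π))

instance : SFinite gaussianRadial := by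
  unfold gaussianRadial; infer_instance

theorem gaussianPDF_mul_gaussianPDF (x y : ℝ) :
    gaussianPDF 0 1 x * gaussianPDF 0 1 y =
      ENNReal.ofReal (exp (-(x ^ 2 + y ^ 2) / 2) / (2 * π)) := by
  rw [gaussianPDF, gaussianPDF, ← ENNReal.ofReal_mul (gaussianPDFReal_nonneg _ _ _)]
  congr 1
  simp only [gaussianPDFReal, NNReal.coe_one, mul_one, sub_zero]
  rw [mul_mul_mul_comm, ← exp_add, ← mul_inv, mul_self_sqrt (by positivity), inv_mul_eq_div]
  ring_nf

theorem gaussianReal_prod_gaussianReal :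
    (gaussianReal 0 1).prod (gaussianReal 0 1) =
      (volume : Measure (ℝ × ℝ)).withDensity
        fun z => ENNReal.ofReal (exp (-(z.1 ^ 2 + z.2 ^ 2) / 2) / (2 * π)) := by
  rw [gaussianReal_of_var_ne_zero 0 one_ne_zero,
    prod_withDensity (measurable_gaussianPDF 0 1) (measurable_gaussianPDF 0 1)]
  simp_rw [gaussianPDF_mul_gaussianPDF, Measure.volume_eq_prod]

theorem gaussianRadial_prod_circleArc :
    gaussianRadial.prod circleArc =
      ((volume.restrict polarCoord.target).withDensity fun p =>
        ENNReal.ofReal (p.1 * exp (-p.1 ^ 2 / 2) / (2 * π))).map (Prod.map id Circle.exp) := by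
  rw [polarCoord_target, Measure.volume_eq_prod, ← Measure.prod_restrict,
    ← prod_withDensity_left (f := fun r => ENNReal.ofReal (r * exp (-r ^ 2 / 2) / (2 * π)))
      (by fun_prop),
    ← Measure.map_prod_map _ _ measurable_id Circle.exp.continuous.measurable, Measure.map_id]
  rfl

theorem map_polar_gaussianRadial_prod_circleArc :
    (gaussianRadial.prod circleArc).map (fun p => (p.1 * (p.2 : ℂ).re, p.1 * (p.2 : ℂ).im)) =
      (gaussianReal 0 1).prod (gaussianReal 0 1) := by
  have h_polar : (fun p : ℝ × Circle => (p.1 * (p.2 : ℂ).re, p.1 * (p.2 : ℂ).im)) ∘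
      Prod.map id Circle.exp = polarCoord.symm := by
    ext p <;> simp [Circle.coe_exp, Complex.exp_ofReal_mul_I_re, Complex.exp_ofReal_mul_I_im]
  rw [gaussianRadial_prod_circleArc, Measure.map_map (by fun_prop) (by fun_prop), h_polar,
    gaussianReal_prod_gaussianReal]
  refine Measure.ext_of_lintegral _ fun F hF => ?_
  have h_meas : Measurable polarCoord.symm := h_polar ▸ by fun_prop
  rw [lintegral_map hF h_meas, lintegral_withDensity_eq_lintegral_mul _ (by fun_prop) (by fun_prop),
    lintegral_withDensity_eq_lintegral_mul _ (by fun_prop) (by fun_prop),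
    ← lintegral_comp_polarCoord_symm]
  refine setLIntegral_congr_fun polarCoord.open_target.measurableSet fun p hp => ?_
  have hp_pos : 0 < p.1 := hp.1
  simp only [Pi.mul_apply, polarCoord_symm_apply, smul_eq_mul, ← mul_assoc]
  rw [← ENNReal.ofReal_mul hp_pos.le, mul_div_assoc, mul_pow, mul_pow, ← mul_add,
    cos_sq_add_sin_sq, mul_one]

/-- A point of the unit circle of `ℂ` as a vector of `ℝ²`. -/
def circleVec (z : Circle) : Fin 2 → ℝ := ![(z : ℂ).re, (z : ℂ).im]

@[fun_prop]
theorem measurable_circleVec : Measurable circleVec := by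
  have h_re : Measurable fun z : Circle => (z : ℂ).re := by fun_prop
  have h_im : Measurable fun z : Circle => (z : ℂ).im := by fun_prop
  refine measurable_pi_iff.2 fun i => ?_
  fin_cases i
  exacts [h_re, h_im]

theorem stdGaussian_fin_two_eq_map :
    _root_.stdGaussian (Fin 2) =
      (gaussianRadial.prod circleArc).map fun p => p.1 • circleVec p.2 := by
  have h_vec : (fun p : ℝ × Circle => p.1 • circleVec p.2) =
      MeasurableEquiv.finTwoArrow.symm ∘ fun p => (p.1 * (p.2 : ℂ).re, p.1 * (p.2 : ℂ).im) := by
    ext p i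
    fin_cases i <;> simp [circleVec, MeasurableEquiv.finTwoArrow]
  rw [h_vec, ← Measure.map_map (by fun_prop) (by fun_prop), map_polar_gaussianRadial_prod_circleArc]
  exact ((measurePreserving_finTwoArrow (gaussianReal 0 1)).symm).map_eq.symm

theorem map_stdGaussian_eq_map_radial_mul_angular {R : (Fin 2 → ℝ) → ℝ} {k : ℕ}
    (hR : Measurable R) (h_smul : ∀ r x, R (r • x) = r ^ k * R x) {g : Circle → ℝ}
    (hg : Measurable g) {φ : Circle → Circle} (hφ : MeasurePreserving φ circleArc circleArc)
    (hRφ : ∀ z, R (circleVec z) = g (φ z)) :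
    (_root_.stdGaussian (Fin 2)).map R =
      (gaussianRadial.prod circleArc).map fun p => p.1 ^ k * g p.2 := by
  have h_comp : (R ∘ fun p : ℝ × Circle => p.1 • circleVec p.2) =
      (fun p => p.1 ^ k * g p.2) ∘ Prod.map id φ := by
    ext p
    simp [h_smul, hRφ]
  rw [stdGaussian_fin_two_eq_map, Measure.map_map hR (by fun_prop), h_comp,
    ← Measure.map_map (by fun_prop) (measurable_id.prodMap hφ.measurable),
    ((MeasurePreserving.id gaussianRadial).prod hφ).map_eq]

theorem circle_re_sq (z : Circle) : (z : ℂ).re ^ 2 = (1 + (z ^ 2 : ℂ).re) / 2 := by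
  have h_normSq := z.normSq_coe
  rw [Complex.normSq_apply] at h_normSq
  rw [pow_two (z : ℂ), Complex.mul_re]
  linarith

theorem map_stdGaussian_eval {ι : Type*} [Fintype ι] (i : ι) :
    (_root_.stdGaussian ι).map (fun x => x i) = gaussianReal 0 1 :=
  (measurePreserving_eval (fun _ : ι => gaussianReal 0 1) i).map_eq

theorem map_stdGaussian_eq_map_sq {R : (Fin 2 → ℝ) → ℝ} (hR : Measurable R)
    (h_smul : ∀ r x, R (r • x) = r ^ 2 * R x) {φ : Circle → Circle}
    (hφ : MeasurePreserving φ circleArc circleArc)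
    (hRφ : ∀ z, R (circleVec z) = (1 + (φ z : ℂ).re) / 2) :
    (_root_.stdGaussian (Fin 2)).map R = (gaussianReal 0 1).map (· ^ 2) := by
  have h_sq : MeasurePreserving (fun z : Circle => z ^ 2) circleArc circleArc := by
    simpa using measurePreserving_const_mul_pow 1 two_ne_zero
  have hg : Measurable fun z : Circle => (1 + (z : ℂ).re) / 2 := by fun_prop
  rw [← map_stdGaussian_eval (0 : Fin 2), Measure.map_map (by fun_prop) (by fun_prop),
    map_stdGaussian_eq_map_radial_mul_angular hR h_smul hg hφ hRφ]
  refine (map_stdGaussian_eq_map_radial_mul_angular (by fun_prop) (fun r x => ?_) hg h_sq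
    fun z => ?_).symm
  · simp [mul_pow]
  · simpa [circleVec] using circle_re_sq z

section QuadraticPoly

variable {ι : Type*} [Fintype ι]

/-- The quadratic form `xᵀ A x` as a polynomial; `A` need not be symmetric. -/
def quadraticPoly (A : Matrix ι ι ℝ) : MvPolynomial ι ℝ :=
  ∑ i, ∑ j, C (A i j) * X i * X j

theorem eval_quadraticPoly (A : Matrix ι ι ℝ) (x : ι → ℝ) :
    eval x (quadraticPoly A) = x ⬝ᵥ A *ᵥ x := by
  simp only [quadraticPoly, map_sum, map_mul, eval_C, eval_X, dotProduct, mulVec, Finset.mul_sum]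
  exact Finset.sum_congr rfl fun i _ => Finset.sum_congr rfl fun j _ => by ring

theorem polyGrad_quadraticPoly (A : Matrix ι ι ℝ) (x : ι → ℝ) :
    polyGrad (quadraticPoly A) x = (A + Aᵀ) *ᵥ x := by
  classical
  ext k
  have h_term (i j : ι) : eval x (pderiv k (C (A i j) * X i * X j)) =
      (if i = k then A i j * x j else 0) + if j = k then A i j * x i else 0 := by
    simp only [Derivation.leibniz, pderiv_C, pderiv_X, Pi.single_apply, smul_eq_mul]
    split_ifs <;> simp <;> ring
  calc polyGrad (quadraticPoly A) x k
      = ∑ i, ∑ j, ((if i = k then A i j * x j else 0) + if j = k then A i j * x i else 0) := by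
        simp only [polyGrad, quadraticPoly, map_sum, h_term]
    _ = ∑ j, A k j * x j + ∑ i, A i k * x i := by
        simp only [Finset.sum_add_distrib]
        rw [Finset.sum_comm]
        simp
    _ = ((A + Aᵀ) *ᵥ x) k := by
        rw [add_mulVec]
        rfl

theorem waldRV_quadraticPoly_mulVec [DecidableEq ι] (A L : Matrix ι ι ℝ) (z : ι → ℝ) :
    waldRV (quadraticPoly A) (L * Lᵀ) (L *ᵥ z) = waldRV (quadraticPoly (Lᵀ * A * L)) 1 z := by
  have h_dot (x y : ι → ℝ) : L *ᵥ x ⬝ᵥ y = x ⬝ᵥ Lᵀ *ᵥ y := by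
    rw [dotProduct_mulVec, vecMul_transpose]
  have h_transpose : Lᵀ * A * L + (Lᵀ * A * L)ᵀ = Lᵀ * (A + Aᵀ) * L := by
    simp only [transpose_mul, transpose_transpose, Matrix.mul_add, Matrix.add_mul,
      Matrix.mul_assoc]
  simp only [waldRV, eval_quadraticPoly, polyGrad_quadraticPoly, h_transpose, one_mulVec,
    ← mulVec_mulVec, h_dot]
  rw [dotProduct_comm _ (L *ᵥ _), h_dot]

theorem waldRV_quadraticPoly_smul (A S : Matrix ι ι ℝ) (r : ℝ) (x : ι → ℝ) :
    waldRV (quadraticPoly A) S (r • x) = r ^ 2 * waldRV (quadraticPoly A) S x := by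
  simp only [waldRV, eval_quadraticPoly, polyGrad_quadraticPoly, mulVec_smul, smul_dotProduct,
    dotProduct_smul, smul_eq_mul]
  obtain rfl | hr := eq_or_ne r 0
  · simp
  · field_simp

theorem measurable_waldRV (f : MvPolynomial ι ℝ) (S : Matrix ι ι ℝ) :
    Measurable (waldRV f S) := by
  have h_eval (p : MvPolynomial ι ℝ) : Measurable fun x => eval x p :=
    p.continuous_eval.measurable
  have h_grad (i : ι) : Measurable fun x => polyGrad f x i := h_eval (pderiv i f)
  unfold waldRV
  simp only [dotProduct, mulVec]
  fun_prop

end QuadraticPoly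

theorem quadraticPoly_fin_two (a b c : ℝ) :
    quadraticPoly !![a, b; b, c] = C a * X 0 ^ 2 + C (2 * b) * X 0 * X 1 + C c * X 1 ^ 2 := by
  simp only [quadraticPoly, Fin.sum_univ_two, two_mul, C_add, of_apply, cons_val_zero, cons_val_one]
  ring

theorem isSymm_fin_two_of {α : Type*} (a b c : α) : !![a, b; b, c].IsSymm := by
  ext i j
  fin_cases i <;> fin_cases j <;> rfl

theorem exists_eq_of_isSymm_fin_two {B : Matrix (Fin 2) (Fin 2) ℝ} (hB : B.IsSymm) :
    ∃ (p : ℝ) (β : ℂ), B = !![p + β.re, β.im; β.im, p - β.re] := by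
  refine ⟨(B 0 0 + B 1 1) / 2, ⟨(B 0 0 - B 1 1) / 2, B 0 1⟩, ?_⟩
  have h_symm : B 1 0 = B 0 1 := hB.apply 0 1
  ext i j
  fin_cases i <;> fin_cases j <;> simp [h_symm] <;> ring

theorem mulVec_circleVec (p : ℝ) (β : ℂ) (z : Circle) :
    !![p + β.re, β.im; β.im, p - β.re] *ᵥ circleVec z =
      ![(p * (z : ℂ) + β * conj (z : ℂ)).re, (p * (z : ℂ) + β * conj (z : ℂ)).im] := by
  ext i
  fin_cases i <;> simp [circleVec, mulVec, dotProduct] <;> ring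

theorem four_mul_waldRV_circleVec (p : ℝ) (β : ℂ) (z : Circle) :
    4 * waldRV (quadraticPoly !![p + β.re, β.im; β.im, p - β.re]) 1 (circleVec z) =
      (p + β * conj (z : ℂ) ^ 2).re ^ 2 / Complex.normSq (p + β * conj (z : ℂ) ^ 2) := by
  set B := !![p + β.re, β.im; β.im, p - β.re]
  have hB : B + Bᵀ = (2 : ℝ) • B := by
    rw [(isSymm_fin_two_of _ _ _).eq, two_smul]
  have h_factor : conj (z : ℂ) * (p * z + β * conj (z : ℂ)) = p + β * conj (z : ℂ) ^ 2 := by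
    linear_combination p * circle_mul_conj z
  have h_form : circleVec z ⬝ᵥ B *ᵥ circleVec z = (p + β * conj (z : ℂ) ^ 2).re := by
    rw [mulVec_circleVec, ← h_factor, Complex.mul_re]
    simp [circleVec, dotProduct]
  have h_grad : B *ᵥ circleVec z ⬝ᵥ B *ᵥ circleVec z =
      Complex.normSq (p + β * conj (z : ℂ) ^ 2) := by
    rw [mulVec_circleVec, ← h_factor, Complex.normSq_mul, Complex.normSq_conj, z.normSq_coe,
      one_mul, Complex.normSq_apply]
    simp [dotProduct]
  rw [waldRV, eval_quadraticPoly, polyGrad_quadraticPoly, hB, smul_mulVec, one_mulVec,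
    smul_dotProduct, dotProduct_smul, h_form, h_grad, smul_eq_mul, smul_eq_mul]
  ring

theorem re_sq_div_normSq {V : ℂ} (hV : V ≠ 0) :
    V.re ^ 2 / Complex.normSq V = (1 + (conj V / V).re) / 2 := by
  have h : V.re ^ 2 + V.im ^ 2 ≠ 0 := by
    rwa [sq, sq, ← Complex.normSq_apply, map_ne_zero]
  rw [Complex.div_re, Complex.conj_re, Complex.conj_im, Complex.normSq_apply, ← sq, neg_mul, ← sq]
  field_simp
  ring

theorem re_sq_div_normSq_mul_one_add_conj {p : ℝ} (hp : p ≠ 0) (w : Circle) :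
    (p * (1 + conj (w : ℂ))).re ^ 2 / Complex.normSq (p * (1 + conj (w : ℂ))) =
      (1 + (w : ℂ).re) / 2 := by
  have h_normSq : Complex.normSq (1 + conj (w : ℂ)) = 2 * (1 + (w : ℂ).re) := by
    rw [Complex.normSq_add, Complex.normSq_conj, w.normSq_coe]
    simp only [map_one, one_mul, Complex.conj_conj]
    ring
  rw [Complex.normSq_mul, h_normSq, Complex.re_ofReal_mul, Complex.normSq_ofReal]
  have h_re : (1 + conj (w : ℂ)).re = 1 + (w : ℂ).re := rfl
  rw [h_re]
  -- At `w = -1` the left-hand side is `0 / 0`, which is `0` and agrees with the right-hand side.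
  obtain h | h := eq_or_ne (1 + (w : ℂ).re) 0
  · simp [h]
  · field_simp

theorem exists_measurePreserving_re_sq_div_normSq_of_abs_lt {p : ℝ} {β : ℂ} (hp : |p| < ‖β‖) :
    ∃ φ : Circle → Circle, MeasurePreserving φ circleArc circleArc ∧
      ∀ z : Circle, (p + β * conj (z : ℂ) ^ 2).re ^ 2 /
        Complex.normSq (p + β * conj (z : ℂ) ^ 2) = (1 + (φ z : ℂ).re) / 2 := by
  have h_denom {w : ℂ} (hw : w ∈ closure (Metric.ball (0 : ℂ) 1)) : β + p * w ^ 2 ≠ 0 := by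
    rw [closure_ball _ one_ne_zero, mem_closedBall_zero_iff] at hw
    intro h
    apply hp.not_ge
    calc ‖β‖ = |p| * ‖w‖ ^ 2 := by
          rw [eq_neg_of_add_eq_zero_left h, norm_neg, norm_mul, norm_pow, Complex.norm_real,
            norm_eq_abs]
      _ ≤ |p| := mul_le_of_le_one_right (abs_nonneg p) (pow_le_one₀ (norm_nonneg w) hw)
  have h_factor (z : Circle) : (z : ℂ) ^ 2 * (p + β * conj (z : ℂ) ^ 2) = β + p * (z : ℂ) ^ 2 := by
    linear_combination β * ((z : ℂ) * conj (z : ℂ) + 1) * circle_mul_conj z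
  have hV (z : Circle) : (p + β * conj (z : ℂ) ^ 2 : ℂ) ≠ 0 := by
    refine right_ne_zero_of_mul (a := (z : ℂ) ^ 2) ?_
    rw [h_factor]
    exact h_denom (by simp [closure_ball _ one_ne_zero, z.norm_coe])
  have h_blaschke : DiffContOnCl ℂ (fun w : ℂ => w ^ 2 * (p + conj β * w ^ 2) / (β + p * w ^ 2))
      (Metric.ball 0 1) :=
    DifferentiableOn.diffContOnCl <| DifferentiableOn.div (by fun_prop) (by fun_prop) @h_denom
  refine ⟨fun z => Circle.ofConjDivSelf _ (hV z),
    measurePreserving_circleArc_of_boundary_values h_blaschke (by simp) fun z => ?_,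
    fun z => re_sq_div_normSq (hV z)⟩
  rw [← h_factor, mul_div_mul_left _ _ (pow_ne_zero 2 z.coe_ne_zero)]
  simp [Circle.ofConjDivSelf]

theorem exists_measurePreserving_re_sq_div_normSq_of_abs_eq {p : ℝ} {β : ℂ} (hβ : β ≠ 0)
    (hp : |p| = ‖β‖) :
    ∃ φ : Circle → Circle, MeasurePreserving φ circleArc circleArc ∧
      ∀ z : Circle, (p + β * conj (z : ℂ) ^ 2).re ^ 2 /
        Complex.normSq (p + β * conj (z : ℂ) ^ 2) = (1 + (φ z : ℂ).re) / 2 := by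
  have hp0 : p ≠ 0 := abs_ne_zero.1 (hp ▸ norm_ne_zero_iff.2 hβ)
  obtain ⟨u, hu⟩ : ∃ u : Circle, (u : ℂ) = conj β / p :=
    ⟨⟨conj β / p, by simp [Submonoid.unitSphere, hp, hβ]⟩, rfl⟩
  refine ⟨_, measurePreserving_const_mul_pow u two_ne_zero, fun z => ?_⟩
  rw [← re_sq_div_normSq_mul_one_add_conj hp0]
  have h_factor : (p + β * conj (z : ℂ) ^ 2 : ℂ) = p * (1 + conj ((u * z ^ 2 : Circle) : ℂ)) := by
    have hp_coe : (p : ℂ) ≠ 0 := mod_cast hp0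
    rw [Circle.coe_mul, Circle.coe_pow, hu, map_mul, map_div₀, Complex.conj_conj,
      Complex.conj_ofReal, map_pow]
    field_simp
  rw [h_factor]

theorem map_waldRV_quadraticPoly_one {B : Matrix (Fin 2) (Fin 2) ℝ} (hB : B.IsSymm) (h0 : B ≠ 0)
    (hdet : B.det ≤ 0) :
    (_root_.stdGaussian (Fin 2)).map (waldRV (quadraticPoly B) 1) =
      (gaussianReal 0 1).map (fun z => 1 / 4 * z ^ 2) := by
  obtain ⟨p, β, rfl⟩ := exists_eq_of_isSymm_fin_two hB
  have h_le : |p| ≤ ‖β‖ := by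
    rw [← sq_le_sq₀ (abs_nonneg p) (norm_nonneg β), sq_abs, ← Complex.normSq_eq_norm_sq,
      Complex.normSq_apply]
    rw [det_fin_two_of] at hdet
    linarith
  have hβ : β ≠ 0 := by
    rintro rfl
    obtain rfl : p = 0 := by simpa using h_le
    exact h0 (by ext i j; fin_cases i <;> fin_cases j <;> simp)
  obtain ⟨φ, hφ, h_angle⟩ := h_le.lt_or_eq.elim
    exists_measurePreserving_re_sq_div_normSq_of_abs_lt
    (exists_measurePreserving_re_sq_div_normSq_of_abs_eq hβ)
  set W := waldRV (quadraticPoly !![p + β.re, β.im; β.im, p - β.re]) 1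
  have hW : Measurable W := measurable_waldRV _ _
  have hW_smul (r : ℝ) (x : Fin 2 → ℝ) : W (r • x) = r ^ 2 * W x :=
    waldRV_quadraticPoly_smul _ _ r x
  have h_law : (_root_.stdGaussian (Fin 2)).map (fun x => 4 * W x) =
      (gaussianReal 0 1).map (· ^ 2) :=
    map_stdGaussian_eq_map_sq (hW.const_mul 4) (fun r x => by rw [hW_smul, mul_left_comm]) hφ
      fun z => (four_mul_waldRV_circleVec p β z).trans (h_angle z)
  calc (_root_.stdGaussian (Fin 2)).map W
      = ((_root_.stdGaussian (Fin 2)).map fun x => 4 * W x).map (1 / 4 * ·) := by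
        rw [Measure.map_map (by fun_prop) (hW.const_mul 4)]
        simp [Function.comp_def]
    _ = (gaussianReal 0 1).map (fun z => 1 / 4 * z ^ 2) := by
        rw [h_law, Measure.map_map (by fun_prop) (by fun_prop)]
        rfl

theorem bivariate_quadratic_nonneg_disc_general (a b c : ℝ) {S : Matrix (Fin 2) (Fin 2) ℝ}
    (hSA : S * !![a, b; b, c] * S ≠ 0) (hdisc : 0 ≤ S.det * (b ^ 2 - a * c))
    {μ : Measure (Fin 2 → ℝ)} (hμ : IsCenteredGaussian μ S) :
    μ.map (waldRV (C a * X 0 ^ 2 + C (2 * b) * X 0 * X 1 + C c * X 1 ^ 2) S) =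
      (gaussianReal 0 1).map (fun z => 1 / 4 * z ^ 2) := by
  obtain ⟨L, rfl, rfl⟩ := hμ
  set A := !![a, b; b, c] with hA
  have hB_symm : (Lᵀ * A * L).IsSymm := by
    rw [IsSymm, transpose_mul, transpose_mul, transpose_transpose, (isSymm_fin_two_of a b c).eq,
      Matrix.mul_assoc]
  have hB0 : Lᵀ * A * L ≠ 0 := fun h => hSA <|
    calc L * Lᵀ * A * (L * Lᵀ) = L * (Lᵀ * A * L) * Lᵀ := by simp only [Matrix.mul_assoc]
      _ = 0 := by rw [h, Matrix.mul_zero, Matrix.zero_mul]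
  have hB_det : (Lᵀ * A * L).det ≤ 0 := by
    rw [det_mul, det_transpose] at hdisc
    rw [det_mul, det_mul, det_transpose, hA, det_fin_two_of]
    linarith
  have h_law := map_waldRV_quadraticPoly_one hB_symm hB0 hB_det
  rw [← quadraticPoly_fin_two, Measure.map_map (measurable_waldRV _ _) (by fun_prop), ← h_law]
  exact congr_arg (fun g => Measure.map g _) (funext fun z => waldRV_quadraticPoly_mulVec A L z)

/-- Let `Σ` be positive definite `2×2` and
`f(x₁,x₂) = a x₁² + 2b x₁x₂ + c x₂²` a nonzero quadratic form with matrix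
`A = !![a, b; b, c] ≠ 0`.  If `b² − ac ≥ 0`, then `W_{f,Σ} ~ (1/4)·χ²₁`. -/
theorem bivariate_quadratic_nonneg_disc (a b c : ℝ)
    (hA0 : !![a, b; b, c] ≠ (0 : Matrix (Fin 2) (Fin 2) ℝ))
    (hdisc : b ^ 2 - a * c ≥ 0)
    (S : Matrix (Fin 2) (Fin 2) ℝ) (hS : S.PosDef)
    (μ : Measure (Fin 2 → ℝ)) (hμ : IsCenteredGaussian μ S) :
    μ.map (waldRV (C a * X 0 ^ 2 + C (2 * b) * X 0 * X 1 + C c * X 1 ^ 2) S) =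
      (gaussianReal 0 1).map (fun z => 1 / 4 * z ^ 2) := by
  refine bivariate_quadratic_nonneg_disc_general a b c (fun h => hA0 ?_)
    (mul_nonneg hS.det_pos.le hdisc) hμ
  rwa [hS.isUnit.mul_left_eq_zero, hS.isUnit.mul_right_eq_zero] at h
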